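/- Let A = (a_{ij}) be an (n+1)×(n+1) complex matrix, F a homogeneous form of degree d ≥ 3 over C defining a smooth hypersurface in P^n, and λ ∈ C such that Σ_{i,j} a_{ij} X_j ∂F/∂X_i = λ F. Then A = (λ/d)·I, i.e., A is a scalar matrix. -/

import Mathlib

open MvPolynomial

/-!
Subtracting `λ/d` from `A` and using Euler's identity, one may assume that the linear vector field
`D = ∑ bᵢⱼ Xⱼ ∂ᵢ` kills `F`. Commuting `D` with `∂ₖ` shows that the gradient `G = (∂ₖF)` satisfies
`D G = -Bᵀ G`; it is homogeneous of degree `e = d - 1 ≥ 2` and vanishes only at the origin.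

* If `v` is an eigenvector of `B` for `μ`, then `G v ≠ 0` is an eigenvector of `-Bᵀ` for `e μ`. So
  multiplication by `-e` preserves the finite spectrum of `B`, which is therefore `{0}`: `B` is
  nilpotent.
* If `Bᵐ⁺¹ = 0` with `m ≥ 1`, then `D` kills `G` after `m + 1 ≤ e m` applications, while `D^(e m) G`
  is a nonzero multiple of `x ↦ G (Bᵐ x)`. So `G` vanishes on the image of `Bᵐ`, that is, `Bᵐ = 0`.
-/

section Derivation

open Finset
open scoped Nat

variable {R A : Type*} [CommSemiring R] [CommSemiring A] [Algebra R A] (D : Derivation R A A)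

lemma derivation_iterate_mul (n : ℕ) (f g : A) :
    D^[n] (f * g) = ∑ ij ∈ antidiagonal n, n.choose ij.1 • (D^[ij.1] f * D^[ij.2] g) := by
  induction n with
  | zero => simp
  | succ n ih =>
    rw [sum_antidiagonal_choose_succ_nsmul (fun i j => D^[i] f * D^[j] g) n]
    simp only [Function.iterate_succ_apply', ih, map_sum, map_nsmul, Derivation.leibniz,
      smul_eq_mul, smul_add, sum_add_distrib]
    congr 1
    refine sum_congr rfl fun ⟨i, j⟩ hij => ?_
    rw [n.choose_symm_of_eq_add (HasAntidiagonal.mem_antidiagonal.mp hij).symm, mul_comm]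

lemma derivation_sum_apply {ι : Type*} (s : Finset ι) (E : ι → Derivation R A A) (f : A) :
    (∑ i ∈ s, E i) f = ∑ i ∈ s, E i f := by
  rw [← Derivation.coeFnAddMonoidHom_apply, map_sum, Finset.sum_apply]
  rfl

variable {D}

lemma derivation_iterate_eq_sum_pow_smul {ι : Type*} [Fintype ι] [DecidableEq ι] {G : ι → A}
    {M : Matrix ι ι R} (hM : ∀ k, D (G k) = ∑ i, M k i • G i) (s : ℕ) (k : ι) :
    D^[s] (G k) = ∑ i, (M ^ s) k i • G i := by
  induction s with
  | zero => simp [Matrix.one_apply]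
  | succ s ih =>
    simp only [Function.iterate_succ_apply', ih, map_sum, Derivation.map_smul, hM, smul_sum,
      smul_smul, pow_succ, Matrix.mul_apply, sum_smul]
    exact sum_comm

lemma derivation_iterate_eq_zero_of_lt {f : A} {a n : ℕ} (hf : D^[a + 1] f = 0) (hn : a < n) :
    D^[n] f = 0 := by
  rw [← Nat.sub_add_cancel hn, Function.iterate_add_apply, hf, iterate_map_zero]

lemma derivation_iterate_mul_eq_zero {f g : A} {a b : ℕ} (hf : D^[a + 1] f = 0)
    (hg : D^[b + 1] g = 0) : D^[a + b + 1] (f * g) = 0 := by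
  rw [derivation_iterate_mul]
  refine sum_eq_zero fun ⟨i, j⟩ hij => ?_
  rw [HasAntidiagonal.mem_antidiagonal] at hij
  obtain hi | hj : a < i ∨ b < j := by omega
  · simp [derivation_iterate_eq_zero_of_lt hf hi]
  · simp [derivation_iterate_eq_zero_of_lt hg hj]

lemma derivation_iterate_mul_top {f g : A} {a b : ℕ} (hf : D^[a + 1] f = 0)
    (hg : D^[b + 1] g = 0) :
    D^[a + b] (f * g) = (a + b).choose a • (D^[a] f * D^[b] g) := by
  rw [derivation_iterate_mul]
  refine sum_eq_single_of_mem (a, b) (by simp) fun ⟨i, j⟩ hij hne => ?_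
  rw [HasAntidiagonal.mem_antidiagonal] at hij
  obtain hi | hj : a < i ∨ b < j := by grind
  · simp [derivation_iterate_eq_zero_of_lt hf hi]
  · simp [derivation_iterate_eq_zero_of_lt hg hj]

variable {ι : Type*} {x : ι → A} {m : ℕ}

lemma derivation_iterate_multiset_prod_eq_zero (hx : ∀ i, D^[m + 1] (x i) = 0) (S : Multiset ι) :
    D^[S.card * m + 1] (S.map x).prod = 0 := by
  induction S using Multiset.induction_on with
  | empty => simp
  | cons i S ih =>
    rw [Multiset.map_cons, Multiset.prod_cons, Multiset.card_cons, add_one_mul, add_comm _ m]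
    exact derivation_iterate_mul_eq_zero (hx i) ih

lemma derivation_iterate_multiset_prod_top (hx : ∀ i, D^[m + 1] (x i) = 0) (S : Multiset ι) :
    m ! ^ S.card • D^[S.card * m] (S.map x).prod =
      (S.card * m)! • (S.map fun i => D^[m] (x i)).prod := by
  induction S using Multiset.induction_on with
  | empty => simp
  | cons i S ih =>
    have h_factorial :
        m ! * (m + S.card * m).choose m * (S.card * m)! = (m + S.card * m)! := by
      rw [mul_comm (m !), Nat.choose_symm_add, Nat.add_choose_mul_factorial_mul_factorial]
    rw [Multiset.map_cons, Multiset.map_cons, Multiset.prod_cons, Multiset.prod_cons,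
      Multiset.card_cons, add_one_mul, add_comm _ m,
      derivation_iterate_mul_top (hx i) (derivation_iterate_multiset_prod_eq_zero hx S),
      ← h_factorial, mul_smul _ (S.card * m)!, ← mul_smul_comm (S.card * m)!, ← ih,
      mul_smul_comm, smul_smul, smul_smul, pow_succ]
    congr 1
    ring

/-- Up to the factor `(e m)! / (m!)ᵉ`, this is the top coefficient of `exp (t D) (Q x)`, which
equals `Q (exp (t D) x)` because `exp (t D)` is a ring homomorphism. -/
lemma derivation_iterate_aeval_top (hx : ∀ i, D^[m + 1] (x i) = 0) {e : ℕ} {Q : MvPolynomial ι R}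
    (hQ : Q.IsHomogeneous e) :
    m ! ^ e • D^[e * m] (aeval x Q) = (e * m)! • aeval (fun i => D^[m] (x i)) Q := by
  have h_monomial : ∀ s ∈ Q.support,
      m ! ^ e • D^[e * m] (∏ i ∈ s.support, x i ^ s i) =
        (e * m)! • ∏ i ∈ s.support, D^[m] (x i) ^ s i := by
    intro s hs
    have h_card : s.toMultiset.card = e := by
      rw [Finsupp.card_toMultiset]
      exact (Finsupp.degree_apply s).symm.trans (hQ.degree_eq_sum_deg_support hs).symm
    have h_prod (y : ι → A) : (s.toMultiset.map y).prod = ∏ i ∈ s.support, y i ^ s i := by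
      rw [Finsupp.toMultiset_map, Finsupp.prod_toMultiset]
      exact Finsupp.prod_mapDomain_index (by simp) fun _ _ _ => pow_add _ _ _
    simpa only [h_card, h_prod] using derivation_iterate_multiset_prod_top hx s.toMultiset
  have h_iterate (f : A) : D^[e * m] f = ((D : A →ₗ[R] A) ^ (e * m)) f := by
    rw [Module.End.pow_apply]
    rfl
  simp only [h_iterate] at h_monomial ⊢
  simp only [aeval_def, eval₂_eq, ← Algebra.smul_def, map_sum, map_smul, smul_sum]
  refine sum_congr rfl fun s hs => ?_
  rw [smul_comm, h_monomial s hs, smul_comm]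

end Derivation

section LinearVectorField

variable {R σ : Type*} [CommSemiring R] [Fintype σ]

/-- The linear vector field `x ↦ B x` on affine space, as the derivation `∑ bᵢⱼ Xⱼ ∂ᵢ` of its
coordinate ring. -/
noncomputable def linearVectorField (B : Matrix σ σ R) :
    Derivation R (MvPolynomial σ R) (MvPolynomial σ R) :=
  mkDerivation R fun i => ∑ j, B i j • X j

lemma linearVectorField_X (B : Matrix σ σ R) (i : σ) :
    linearVectorField B (X i) = ∑ j, B i j • X j :=
  mkDerivation_X R _ i

lemma linearVectorField_apply (B : Matrix σ σ R) (Q : MvPolynomial σ R) :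
    linearVectorField B Q = ∑ i, ∑ j, C (B i j) * X j * pderiv i Q := by
  classical
  have h_eq : linearVectorField B = ∑ i, (∑ j, B i j • X j : MvPolynomial σ R) • pderiv i := by
    refine derivation_ext fun k => ?_
    simp [linearVectorField_X, derivation_sum_apply, pderiv_X, Pi.single_apply]
  simp [h_eq, derivation_sum_apply, smul_eq_C_mul, Finset.sum_mul]

open Matrix in
lemma eval_linearVectorField_of_mulVec_eq_smul {B : Matrix σ σ R} {v : σ → R} {μ : R}
    (hv : B *ᵥ v = μ • v) {e : ℕ} {Q : MvPolynomial σ R} (hQ : Q.IsHomogeneous e) :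
    eval v (linearVectorField B Q) = e * μ * eval v Q := by
  have h_row (i : σ) : ∑ j, B i j * v j = μ * v i := congrFun hv i
  have h_euler : ∑ i, v i * eval v (pderiv i Q) = e * eval v Q := by
    simpa using congrArg (eval v) hQ.sum_X_mul_pderiv
  calc eval v (linearVectorField B Q)
      = ∑ i, (∑ j, B i j * v j) * eval v (pderiv i Q) := by
        simp [linearVectorField_apply, Finset.sum_mul]
    _ = μ * ∑ i, v i * eval v (pderiv i Q) := by
        simp only [h_row, Finset.mul_sum, mul_assoc]
    _ = e * μ * eval v Q := by rw [h_euler]; ring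

end LinearVectorField

section LinearVectorFieldRing

variable {R σ : Type*} [CommRing R] [Fintype σ]

lemma linearVectorField_sub_smul_one [DecidableEq σ] (B : Matrix σ σ R) (c : R) {d : ℕ}
    {Q : MvPolynomial σ R} (hQ : Q.IsHomogeneous d) :
    linearVectorField (B - c • 1) Q = linearVectorField B Q - (c * d) • Q := by
  have h_euler : linearVectorField (c • (1 : Matrix σ σ R)) Q = (c * d) • Q := by
    calc linearVectorField (c • (1 : Matrix σ σ R)) Q
        = C c * ∑ i, X i * pderiv i Q := by
          simp [linearVectorField_apply, Matrix.one_apply, apply_ite, Finset.mul_sum, mul_assoc]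
      _ = (c * d) • Q := by
          rw [hQ.sum_X_mul_pderiv, smul_eq_C_mul, C_mul, map_natCast, nsmul_eq_mul, mul_assoc]
  rw [← h_euler]
  simp only [linearVectorField_apply, Matrix.sub_apply, map_sub, sub_mul, Finset.sum_sub_distrib]

lemma lie_pderiv_linearVectorField (B : Matrix σ σ R) (k : σ) :
    ⁅(pderiv k : Derivation R (MvPolynomial σ R) (MvPolynomial σ R)), linearVectorField B⁆ =
      ∑ i, B i k • pderiv i := by
  classical
  refine derivation_ext fun j => ?_
  simp [Derivation.commutator_apply, linearVectorField_X, derivation_sum_apply, pderiv_X,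
    Pi.single_apply, smul_eq_C_mul, apply_ite]

lemma linearVectorField_pderiv_of_eq_zero {B : Matrix σ σ R} {F : MvPolynomial σ R}
    (hF : linearVectorField B F = 0) (k : σ) :
    linearVectorField B (pderiv k F) = ∑ i, (-B.transpose) k i • pderiv i F := by
  have h_lie := DFunLike.congr_fun (lie_pderiv_linearVectorField B k) F
  rw [Derivation.commutator_apply, hF, map_zero, zero_sub, derivation_sum_apply,
    neg_eq_iff_eq_neg] at h_lie
  simp [h_lie]

end LinearVectorFieldRing

section Spectrum

open Matrix

variable {K ι : Type*} [Field K] [Fintype ι] [DecidableEq ι]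

lemma mem_spectrum_iff_exists_mulVec_eq_smul {M : Matrix ι ι K} {μ : K} :
    μ ∈ spectrum K M ↔ ∃ v ≠ 0, M *ᵥ v = μ • v := by
  rw [← Matrix.spectrum_toLin', ← Module.End.hasEigenvalue_iff_mem_spectrum]
  constructor
  · intro h
    obtain ⟨v, hv⟩ := h.exists_hasEigenvector
    exact ⟨v, hv.2, hv.apply_eq_smul⟩
  · rintro ⟨v, hv0, hv⟩
    exact Module.End.hasEigenvalue_of_hasEigenvector ⟨Module.End.mem_eigenspace_iff.mpr hv, hv0⟩

lemma spectrum_transpose {R : Type*} [CommRing R] (M : Matrix ι ι R) :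
    spectrum R Mᵀ = spectrum R M := by
  ext μ
  rw [mem_spectrum_iff_not_isUnit_eval_charpoly, mem_spectrum_iff_not_isUnit_eval_charpoly,
    charpoly_transpose]

lemma isNilpotent_of_spectrum_subset_zero [IsAlgClosed K] {M : Matrix ι ι K}
    (hM : spectrum K M ⊆ {0}) : IsNilpotent M := by
  have h_splits : M.charpoly.Splits := IsAlgClosed.splits _
  have h_roots : M.charpoly.roots = Multiset.replicate M.charpoly.roots.card 0 :=
    Multiset.eq_replicate_card.mpr fun μ hμ =>
      hM (mem_spectrum_iff_isRoot_charpoly.mpr (Polynomial.isRoot_of_mem_roots hμ))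
  have h_charpoly : M.charpoly = Polynomial.X ^ M.charpoly.roots.card := by
    conv_lhs => rw [h_splits.eq_prod_roots_of_monic M.charpoly_monic, h_roots]
    simp
  have h_cayley_hamilton := M.aeval_self_charpoly
  rw [h_charpoly, map_pow, Polynomial.aeval_X] at h_cayley_hamilton
  exact ⟨_, h_cayley_hamilton⟩

end Spectrum

section LinearSystem

open Matrix

variable {σ ι : Type*} [Fintype σ] [DecidableEq σ] [Fintype ι] [DecidableEq ι] {e : ℕ}

lemma natCast_mul_mem_spectrum_of_linearVectorField_eq {K : Type*} [Field K] {B : Matrix σ σ K}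
    {M : Matrix ι ι K} {G : ι → MvPolynomial σ K} (hG : ∀ k, (G k).IsHomogeneous e)
    (hG_zero : ∀ v, (∀ k, eval v (G k) = 0) → v = 0)
    (hM : ∀ k, linearVectorField B (G k) = ∑ i, M k i • G i) {μ : K} (hμ : μ ∈ spectrum K B) :
    e * μ ∈ spectrum K M := by
  obtain ⟨v, hv0, hv⟩ := mem_spectrum_iff_exists_mulVec_eq_smul.mp hμ
  refine mem_spectrum_iff_exists_mulVec_eq_smul.mpr
    ⟨fun k => eval v (G k), fun h => hv0 (hG_zero v (congrFun h)), funext fun k => ?_⟩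
  rw [Pi.smul_apply, smul_eq_mul, ← eval_linearVectorField_of_mulVec_eq_smul hv (hG k), hM]
  simp [mulVec, dotProduct]

lemma pow_eq_zero_of_linearVectorField_eq {R : Type*} [CommRing R] [IsDomain R] [CharZero R]
    {B : Matrix σ σ R} {M : Matrix ι ι R} {G : ι → MvPolynomial σ R} (he : 2 ≤ e)
    (hG : ∀ k, (G k).IsHomogeneous e) (hG_zero : ∀ v, (∀ k, eval v (G k) = 0) → v = 0)
    (hM : ∀ k, linearVectorField B (G k) = ∑ i, M k i • G i) {m : ℕ} (hm : 1 ≤ m)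
    (hB_succ : B ^ (m + 1) = 0) (hM_succ : M ^ (m + 1) = 0) : B ^ m = 0 := by
  have h_iterate_X := derivation_iterate_eq_sum_pow_smul (linearVectorField_X B)
  have h_iterate_G (k : ι) : (linearVectorField B)^[e * m] (G k) = 0 := by
    have h_succ : (linearVectorField B)^[m + 1] (G k) = 0 := by
      rw [derivation_iterate_eq_sum_pow_smul hM, hM_succ]
      simp
    exact derivation_iterate_eq_zero_of_lt h_succ (by nlinarith)
  have h_vanish (v : σ → R) (k : ι) : eval (B ^ m *ᵥ v) (G k) = 0 := by
    have h_top := derivation_iterate_aeval_top (D := linearVectorField B) (x := X) (m := m)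
      (fun i => by rw [h_iterate_X, hB_succ]; simp) (hG k)
    rw [aeval_X_left_apply, h_iterate_G, smul_zero] at h_top
    have h_subst : aeval (fun i => ∑ j, (B ^ m) i j • X j) (G k) = (0 : MvPolynomial σ R) := by
      simpa only [h_iterate_X, smul_eq_zero, Nat.factorial_ne_zero, false_or] using h_top.symm
    have h_eval := congrArg (aeval v) h_subst
    rw [comp_aeval_apply] at h_eval
    have h_mulVec : B ^ m *ᵥ v = fun i => ∑ j, (B ^ m) i j * v j := rfl
    simpa [h_mulVec, aeval_eq_eval] using h_eval
  exact Matrix.ext_of_mulVec_single fun i => by rw [zero_mulVec, hG_zero _ (h_vanish _)]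

end LinearSystem

lemma subset_zero_of_finite_of_mul_mem {M₀ : Type*} [MonoidWithZero M₀]
    [IsRightCancelMulZero M₀] {S : Set M₀} (hS : S.Finite) {c : M₀}
    (hc : Function.Injective fun k : ℕ => c ^ k)
    (h_stable : ∀ μ ∈ S, c * μ ∈ S) : S ⊆ {0} := by
  intro μ hμ
  by_contra hμ0
  have h_orbit (k : ℕ) : c ^ k * μ ∈ S := by
    induction k with
    | zero => simpa using hμ
    | succ k ih => simpa only [pow_succ', mul_assoc] using h_stable _ ih
  exact Set.infinite_of_injective_forall_mem ((mul_left_injective₀ hμ0).comp hc) h_orbit hS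

lemma neg_natCast_pow_injective {R : Type*} [Ring R] [CharZero R] {e : ℕ} (he : 2 ≤ e) :
    Function.Injective fun k : ℕ => (-(e : R)) ^ k := by
  have h_int : Function.Injective fun k : ℕ => (-(e : ℤ)) ^ k :=
    Int.pow_right_injective (by simpa using Nat.lt_of_succ_le he)
  intro k l (hkl : (-(e : R)) ^ k = (-(e : R)) ^ l)
  exact h_int (Int.cast_injective (α := R) (by simpa using hkl))

section Hypersurface

variable {K σ : Type*} [Field K] [IsAlgClosed K] [CharZero K] [Fintype σ]
  {F : MvPolynomial σ K} {d : ℕ}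

lemma isNilpotent_of_linearVectorField_eq_zero [DecidableEq σ] (hd : 3 ≤ d)
    (hF : F.IsHomogeneous d) (hsm : ∀ v : σ → K, (∀ i, eval v (pderiv i F) = 0) → v = 0)
    {B : Matrix σ σ K} (hB : linearVectorField B F = 0) : IsNilpotent B := by
  refine isNilpotent_of_spectrum_subset_zero (subset_zero_of_finite_of_mul_mem B.finite_spectrum
    (neg_natCast_pow_injective (e := d - 1) (by omega)) fun μ hμ => ?_)
  have h_mem := natCast_mul_mem_spectrum_of_linearVectorField_eq (fun _ => hF.pderiv) hsm
    (linearVectorField_pderiv_of_eq_zero hB) hμ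
  rwa [← spectrum.neg_eq, spectrum_transpose, Set.mem_neg, ← neg_mul] at h_mem

lemma eq_zero_of_linearVectorField_eq_zero (hd : 3 ≤ d) (hF : F.IsHomogeneous d)
    (hsm : ∀ v : σ → K, (∀ i, eval v (pderiv i F) = 0) → v = 0) {B : Matrix σ σ K}
    (hB : linearVectorField B F = 0) : B = 0 := by
  classical
  have h_descent (m : ℕ) : B ^ (m + 1) = 0 → B = 0 := by
    induction m with
    | zero => simp
    | succ m ih =>
      intro h_succ
      have hM_succ : (-B.transpose) ^ (m + 1 + 1) = 0 := by
        rw [neg_pow, ← Matrix.transpose_pow, h_succ, Matrix.transpose_zero, mul_zero]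
      exact ih (pow_eq_zero_of_linearVectorField_eq (by omega) (fun _ => hF.pderiv) hsm
        (linearVectorField_pderiv_of_eq_zero hB) (by omega) h_succ hM_succ)
  obtain ⟨m, hm⟩ := isNilpotent_of_linearVectorField_eq_zero hd hF hsm hB
  exact h_descent m (pow_eq_zero_of_le m.le_succ hm)

theorem infinitesimal_stabilizer_is_scalar_general [DecidableEq σ] (hd : 3 ≤ d)
    (hF : F.IsHomogeneous d) (hsm : ∀ v : σ → K, (∀ i, eval v (pderiv i F) = 0) → v = 0)
    (A : Matrix σ σ K) (lam : K) (hA : ∑ i, ∑ j, C (A i j) * X j * pderiv i F = C lam * F) :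
    A = (lam / d) • (1 : Matrix σ σ K) := by
  have hd0 : (d : K) ≠ 0 := Nat.cast_ne_zero.mpr (by omega)
  refine sub_eq_zero.mp (eq_zero_of_linearVectorField_eq_zero hd hF hsm ?_)
  rw [linearVectorField_sub_smul_one A _ hF, linearVectorField_apply, hA,
    div_mul_cancel₀ lam hd0, smul_eq_C_mul, sub_self]

end Hypersurface

/-- The Lie algebra of the projective stabilizer of a smooth hypersurface of degree
`d ≥ 3` is trivial: if `Σ aᵢⱼ Xⱼ ∂F/∂Xᵢ = λ F` then `A = (λ/d)·I`. -/
theorem infinitesimal_stabilizer_is_scalar (n : ℕ)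
    (F : MvPolynomial (Fin (n + 1)) ℂ) (d : ℕ) (hd : 3 ≤ d) (hF : F.IsHomogeneous d)
    (hsm : ∀ v : Fin (n + 1) → ℂ, (∀ i, eval v (pderiv i F) = 0) → v = 0)
    (A : Matrix (Fin (n + 1)) (Fin (n + 1)) ℂ) (lam : ℂ)
    (hA : ∑ i, ∑ j, C (A i j) * X j * pderiv i F = C lam * F) :
    A = (lam / d) • (1 : Matrix (Fin (n + 1)) (Fin (n + 1)) ℂ) :=
  infinitesimal_stabilizer_is_scalar_general hd hF hsm A lam hA
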